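/- Suppose 𝒴 = span(ℝ^N_0, Y_1,…,Y_R) is a finite-dimensional vector subspace of L^0(Ω,𝐅_T,P) with ℝ^N_0 ⊆ 𝒴, and NCA(𝒴) holds. Then f ∈ L^0(Ω,𝐅_T,P) is 𝒴-collectively replicable if and only if ρ^𝒴_−(f) = ρ^𝒴_+(f). -/

import Mathlib

open MeasureTheory Filter Topology

namespace CollectiveArb

variable {Ω : Type*}

/-- Terminal gains `K_i` of admissible (predictable) strategies for an agent with
filtration `F`, trading the assets indexed by `A`, over times `1,…,T`. -/
def gainsSet {J : ℕ} (F : ℕ → MeasurableSpace Ω) (T : ℕ)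
    (A : Finset (Fin J)) (X : Fin J → ℕ → Ω → ℝ) : Set (Ω → ℝ) :=
  { g | ∃ H : Fin J → ℕ → Ω → ℝ,
      (∀ j ∈ A, ∀ s, 1 ≤ s → s ≤ T → Measurable[F (s - 1)] (H j s)) ∧
      g = fun ω => ∑ j ∈ A, ∑ s ∈ Finset.Icc 1 T, H j s ω * (X j s ω - X j (s - 1) ω) }

/-- No collective arbitrage for the gains sets `K` and the exchange set `Y`:
`(K₁ × ⋯ × K_N + Y) ∩ L⁰₊ = {0}`. -/
def NCA {N : ℕ} [MeasurableSpace Ω] (P : Measure Ω)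
    (K : Fin N → Set (Ω → ℝ)) (Y : Set (Fin N → Ω → ℝ)) : Prop :=
  ∀ k : Fin N → Ω → ℝ, ∀ y ∈ Y, (∀ i, k i ∈ K i) →
    (∀ i, ∀ᵐ ω ∂P, 0 ≤ k i ω + y i ω) →
    ∀ i, (fun ω => k i ω + y i ω) =ᵐ[P] fun _ => (0 : ℝ)

/-- `K^𝒴 = ⨉ᵢ (Kᵢ − L⁰₊(ℱᵢ_T)) + 𝒴`. -/
def KY {N : ℕ} [MeasurableSpace Ω] (P : Measure Ω)
    (FT : Fin N → MeasurableSpace Ω)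
    (K : Fin N → Set (Ω → ℝ)) (Y : Set (Fin N → Ω → ℝ)) : Set (Fin N → Ω → ℝ) :=
  { f | ∃ (k l y : Fin N → Ω → ℝ), y ∈ Y ∧ (∀ i, k i ∈ K i) ∧
      (∀ i, Measurable[FT i] (l i) ∧ (∀ᵐ ω ∂P, 0 ≤ l i ω)) ∧
      ∀ i, f i = fun ω => k i ω - l i ω + y i ω }

/-- `ℝ^N_0`: zero-sum deterministic exchanges, viewed as constant random vectors. -/
def zeroSum (Ω : Type*) (N : ℕ) : Set (Fin N → Ω → ℝ) :=
  { y | ∃ x : Fin N → ℝ, (∑ i, x i) = 0 ∧ ∀ i, y i = fun _ => x i }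

/-- `span(ℝ^N_0, Y_1, …, Y_R)`: the finite-dimensional space of exchanges generated
by `ℝ^N_0` and the random vectors `Ys 1, …, Ys R`. -/
def spanExch {N R : ℕ} (Ys : Fin R → Fin N → Ω → ℝ) : Set (Fin N → Ω → ℝ) :=
  { y | ∃ (x : Fin N → ℝ) (c : Fin R → ℝ), (∑ i, x i) = 0 ∧
      ∀ i, y i = fun ω => x i + ∑ r, c r * Ys r i ω }

/-- `span(𝒴₀ ∪ {g})` for a vector subspace `𝒴₀`. -/
def spanWith {N : ℕ} (Y0 : Set (Fin N → Ω → ℝ)) (g : Fin N → Ω → ℝ) :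
    Set (Fin N → Ω → ℝ) :=
  { y | ∃ w ∈ Y0, ∃ c : ℝ, ∀ i, y i = fun ω => w i ω + c * g i ω }

/-- Equivalent martingale measures `Mᵢₑ` for the assets in `A`, w.r.t. the filtration `F`. -/
def martMeasures {J : ℕ} [MeasurableSpace Ω] (P : Measure Ω)
    (F : ℕ → MeasurableSpace Ω) (T : ℕ) (A : Finset (Fin J))
    (X : Fin J → ℕ → Ω → ℝ) : Set (Measure Ω) :=
  { Q | IsProbabilityMeasure Q ∧ Q ≪ P ∧ P ≪ Q ∧
      ∀ j ∈ A, (∀ t, t ≤ T → Integrable (X j t) Q) ∧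
        ∀ s t, s ≤ t → t ≤ T → X j s =ᵐ[Q] Q[X j t | F s] }

/-- Equivalent collective martingale measures `ℳₑ(𝒴)`. -/
def MeY {J N : ℕ} [MeasurableSpace Ω] (P : Measure Ω)
    (F : Fin N → ℕ → MeasurableSpace Ω) (T : ℕ) (assets : Fin N → Finset (Fin J))
    (X : Fin J → ℕ → Ω → ℝ) (Y : Set (Fin N → Ω → ℝ)) : Set (Fin N → Measure Ω) :=
  { Q | (∀ i, Q i ∈ martMeasures P (F i) T (assets i) X) ∧
      (∀ y ∈ Y, ∀ i, Integrable (y i) (Q i)) ∧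
      ∀ y ∈ Y, (∑ i, ∫ ω, y i ω ∂(Q i)) ≤ 0 }

/-- `ℳ^φ_e(𝒴) = {Q ∈ ℳₑ(𝒴) : E_{Qⁱ}[|φⁱ|] < ∞ ∀ i}`. -/
def MeYphi {J N : ℕ} [MeasurableSpace Ω] (P : Measure Ω)
    (F : Fin N → ℕ → MeasurableSpace Ω) (T : ℕ) (assets : Fin N → Finset (Fin J))
    (X : Fin J → ℕ → Ω → ℝ) (Y : Set (Fin N → Ω → ℝ))
    (φ : Fin N → Ω → ℝ) : Set (Fin N → Measure Ω) :=
  { Q | Q ∈ MeY P F T assets X Y ∧ ∀ i, Integrable (φ i) (Q i) }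

/-- Closedness of a set of random vectors under componentwise `P`-a.s. convergence
of sequences (within `L⁰(Ω, 𝐅_T, P)`). -/
def ClosedAS {N : ℕ} [MeasurableSpace Ω] (P : Measure Ω)
    (FT : Fin N → MeasurableSpace Ω) (S : Set (Fin N → Ω → ℝ)) : Prop :=
  ∀ (f : ℕ → Fin N → Ω → ℝ) (g : Fin N → Ω → ℝ),
    (∀ n, f n ∈ S) → (∀ i, Measurable[FT i] (g i)) →
    (∀ i, ∀ᵐ ω ∂P, Tendsto (fun n => f n i ω) atTop (𝓝 (g i ω))) →
    g ∈ S

/-- Collective superhedging price `ρ^𝒴₊(f)` (with `inf ∅ = +∞`). -/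
noncomputable def rhoPlus {N : ℕ} [MeasurableSpace Ω] (P : Measure Ω)
    (K : Fin N → Set (Ω → ℝ)) (Y : Set (Fin N → Ω → ℝ))
    (f : Fin N → Ω → ℝ) : EReal :=
  sInf { z : EReal | ∃ m : Fin N → ℝ, z = ((∑ i, m i : ℝ) : EReal) ∧
      ∃ k : Fin N → Ω → ℝ, (∀ i, k i ∈ K i) ∧ ∃ y ∈ Y,
        ∀ i, ∀ᵐ ω ∂P, f i ω ≤ m i + k i ω + y i ω }

/-- Collective subhedging price `ρ^𝒴₋(f)` (with `sup ∅ = −∞`). -/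
noncomputable def rhoMinus {N : ℕ} [MeasurableSpace Ω] (P : Measure Ω)
    (K : Fin N → Set (Ω → ℝ)) (Y : Set (Fin N → Ω → ℝ))
    (f : Fin N → Ω → ℝ) : EReal :=
  sSup { z : EReal | ∃ m : Fin N → ℝ, z = ((∑ i, m i : ℝ) : EReal) ∧
      ∃ k : Fin N → Ω → ℝ, (∀ i, k i ∈ K i) ∧ ∃ y ∈ Y,
        ∀ i, ∀ᵐ ω ∂P, m i + k i ω - y i ω ≤ f i ω }

/-- `ρ^𝒴₊(f)` is attained. -/
def rhoPlusAttained {N : ℕ} [MeasurableSpace Ω] (P : Measure Ω)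
    (K : Fin N → Set (Ω → ℝ)) (Y : Set (Fin N → Ω → ℝ))
    (f : Fin N → Ω → ℝ) : Prop :=
  ∃ (m : Fin N → ℝ) (k y : Fin N → Ω → ℝ), y ∈ Y ∧ (∀ i, k i ∈ K i) ∧
    (∀ i, ∀ᵐ ω ∂P, f i ω ≤ m i + k i ω + y i ω) ∧
    rhoPlus P K Y f = ((∑ i, m i : ℝ) : EReal)

/-- `ρ^𝒴₋(f)` is attained. -/
def rhoMinusAttained {N : ℕ} [MeasurableSpace Ω] (P : Measure Ω)
    (K : Fin N → Set (Ω → ℝ)) (Y : Set (Fin N → Ω → ℝ))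
    (f : Fin N → Ω → ℝ) : Prop :=
  ∃ (m : Fin N → ℝ) (k y : Fin N → Ω → ℝ), y ∈ Y ∧ (∀ i, k i ∈ K i) ∧
    (∀ i, ∀ᵐ ω ∂P, m i + k i ω - y i ω ≤ f i ω) ∧
    rhoMinus P K Y f = ((∑ i, m i : ℝ) : EReal)

/-- `f` is `𝒴`-collectively replicable: `f ∈ ℝ^N + (K₁ × ⋯ × K_N) + 𝒴` in `L⁰`. -/
def Replicable {N : ℕ} [MeasurableSpace Ω] (P : Measure Ω)
    (K : Fin N → Set (Ω → ℝ)) (Y : Set (Fin N → Ω → ℝ))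
    (f : Fin N → Ω → ℝ) : Prop :=
  ∃ (m : Fin N → ℝ) (k y : Fin N → Ω → ℝ), y ∈ Y ∧ (∀ i, k i ∈ K i) ∧
    ∀ i, f i =ᵐ[P] fun ω => m i + k i ω + y i ω

/-!
A random vector is a function on `Fin N × Ω`, so that the agents form a single market in which
`K₁ × ⋯ × K_N + 𝒴` is one vector space of gains. Adjoining to such a space the measurable multiples
of one payoff keeps the cone `K - L⁰₊` closed: along a measurably chosen subsequence the positions
converge in `[-∞, ∞]`, and where they escape to infinity no arbitrage makes the payoff redundant.
Adjoining first the price increments, backwards in time, and then the finitely many exchanges shows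
that the cone of the collective market is closed. The capitals from which a claim can be
superhedged, respectively subhedged, therefore form a closed set that is bounded below, respectively
above. Equal prices thus mean that one capital allows both, and no arbitrage forces the two hedges
to coincide.
-/

section Subsequences

variable {m : MeasurableSpace Ω}

lemma measurable_glue {h : ℕ → Ω → ℝ} (hh : ∀ n, Measurable (h n)) {σ : Ω → ℕ}
    (hσ : Measurable σ) : Measurable fun ω => h (σ ω) ω :=
  (measurable_from_prod_countable_right (f := fun p : ℕ × Ω => h p.1 p.2) hh).comp
    (hσ.prodMk measurable_id)

lemma exists_ge_abs_sub_liminf_lt {a : ℕ → ℝ} {C : ℝ} (ha : ∀ n, |a n| ≤ C) (k : ℕ) {ε : ℝ}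
    (hε : 0 < ε) : ∃ n, k ≤ n ∧ |a n - liminf a atTop| < ε := by
  have hbelow : IsBoundedUnder (· ≥ ·) atTop a :=
    isBoundedUnder_of ⟨-C, fun n => (abs_le.1 (ha n)).1⟩
  have habove : IsBoundedUnder (· ≤ ·) atTop a :=
    isBoundedUnder_of ⟨C, fun n => (abs_le.1 (ha n)).2⟩
  have hlt : ∃ᶠ n in atTop, a n < liminf a atTop + ε :=
    frequently_lt_of_liminf_lt habove.isCoboundedUnder_ge (lt_add_of_pos_right _ hε)
  have hgt : ∀ᶠ n in atTop, liminf a atTop - ε < a n :=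
    eventually_lt_of_lt_liminf (sub_lt_self _ hε) hbelow
  obtain ⟨n, hlt, hgt, hkn⟩ := (hlt.and_eventually (hgt.and (eventually_ge_atTop k))).exists
  exact ⟨n, hkn, abs_sub_lt_iff.2 ⟨by linarith, by linarith⟩⟩

theorem exists_measurable_subseq_tendsto {u : ℕ → Ω → ℝ} (hu : ∀ n, Measurable (u n))
    (hbdd : ∀ ω, ∃ C, ∀ n, |u n ω| ≤ C) :
    ∃ (σ : ℕ → Ω → ℕ) (v : Ω → ℝ), (∀ k, Measurable (σ k)) ∧ Measurable v ∧
      (∀ k ω, k ≤ σ k ω) ∧ ∀ ω, Tendsto (fun k => u (σ k ω) ω) atTop (𝓝 (v ω)) := by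
  classical
  let v : Ω → ℝ := fun ω => liminf (fun n => u n ω) atTop
  have hv : Measurable v := Measurable.liminf hu
  have hnear (k : ℕ) (ω : Ω) : ∃ n, k ≤ n ∧ |u n ω - v ω| < 1 / ((k : ℝ) + 1) :=
    (hbdd ω).elim fun _ hC => exists_ge_abs_sub_liminf_lt hC k Nat.one_div_pos_of_nat
  refine ⟨fun k ω => Nat.find (hnear k ω), v, fun k => measurable_find (hnear k) fun n => ?_, hv,
    fun k ω => (Nat.find_spec (hnear k ω)).1, fun ω => ?_⟩
  · exact (MeasurableSet.const (k ≤ n)).inter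
      (measurableSet_lt ((hu n).sub hv).abs measurable_const)
  · exact tendsto_iff_norm_sub_tendsto_zero.2 <| squeeze_zero (fun _ => norm_nonneg _)
      (fun k => (Nat.find_spec (hnear k ω)).2.le) tendsto_one_div_add_atTop_nhds_zero_nat

end Subsequences

section Superhedging

variable {l : Filter Ω} {L : Submodule ℝ (Ω → ℝ)} {f g u : Ω → ℝ}

/-- The claims that are dominated by a gain in `L`; this is the set `K - L⁰₊` of the fundamental
theorem of asset pricing. Almost sure statements are read along a filter `l`. -/
def superhedgeable (l : Filter Ω) (L : Submodule ℝ (Ω → ℝ)) : Set (Ω → ℝ) :=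
  {g | ∃ w ∈ L, g ≤ᶠ[l] w}

/-- Closedness of the cone of superhedgeable claims under almost sure convergence of sequences. -/
def SuperhedgeClosed (l : Filter Ω) (L : Submodule ℝ (Ω → ℝ)) : Prop :=
  ∀ ⦃g : ℕ → Ω → ℝ⦄ ⦃g' : Ω → ℝ⦄, (∀ n, g n ∈ superhedgeable l L) →
    (∀ᶠ ω in l, Tendsto (fun n => g n ω) atTop (𝓝 (g' ω))) → g' ∈ superhedgeable l L

/-- Absence of arbitrage: the only nonnegative gain is zero, up to null sets. -/
def NoArbitrage (l : Filter Ω) (L : Submodule ℝ (Ω → ℝ)) : Prop :=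
  ∀ ⦃v⦄, v ∈ L → 0 ≤ᶠ[l] v → v =ᶠ[l] 0

lemma NoArbitrage.mono {L' : Submodule ℝ (Ω → ℝ)} (hNA : NoArbitrage l L') (h : L ≤ L') :
    NoArbitrage l L :=
  fun _ hv => hNA (h hv)

lemma add_mem_superhedgeable (hf : f ∈ superhedgeable l L) (hg : g ∈ superhedgeable l L) :
    f + g ∈ superhedgeable l L := by
  obtain ⟨v, hv, hfv⟩ := hf
  obtain ⟨w, hw, hgw⟩ := hg
  exact ⟨v + w, L.add_mem hv hw, hfv.add_le_add hgw⟩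

lemma smul_mem_superhedgeable {c : ℝ} (hc : 0 ≤ c) (hg : g ∈ superhedgeable l L) :
    c • g ∈ superhedgeable l L := by
  obtain ⟨w, hw, hgw⟩ := hg
  exact ⟨c • w, L.smul_mem c hw, hgw.mono fun ω hω => mul_le_mul_of_nonneg_left hω hc⟩

lemma superhedgeClosed_bot [CountableInterFilter l] : SuperhedgeClosed l ⊥ := by
  intro g g' hg hlim
  have hg0 : ∀ n, g n ≤ᶠ[l] 0 := fun n => by
    obtain ⟨w, hw, hgw⟩ := hg n
    rwa [(Submodule.mem_bot ℝ).1 hw] at hgw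
  refine ⟨0, Submodule.zero_mem _, ?_⟩
  filter_upwards [eventually_countable_forall.2 hg0, hlim] with ω hω hlimω
  exact le_of_tendsto' hlimω hω

lemma NoArbitrage.eq_zero (hNA : NoArbitrage l L) (hg : g ∈ superhedgeable l L)
    (hg0 : 0 ≤ᶠ[l] g) : g =ᶠ[l] 0 := by
  obtain ⟨w, hw, hgw⟩ := hg
  exact (hgw.trans (hNA hw (hg0.trans hgw)).le).antisymm hg0

end Superhedging

section Adjunction

variable {l : Filter Ω} {m : MeasurableSpace Ω} {L : Submodule ℝ (Ω → ℝ)} {x : Ω → ℝ}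

/-- Spaces of gains on which an agent with information `m` can scale positions and switch between
countably many of them. -/
structure IsStable (m : MeasurableSpace Ω) (L : Submodule ℝ (Ω → ℝ)) : Prop where
  mul_mem : ∀ ⦃h : Ω → ℝ⦄, Measurable[m] h → ∀ ⦃w⦄, w ∈ L → h * w ∈ L
  glue_mem : ∀ ⦃w : ℕ → Ω → ℝ⦄, (∀ n, w n ∈ L) → ∀ ⦃σ : Ω → ℕ⦄, Measurable[m] σ →
    (fun ω => w (σ ω) ω) ∈ L

/-- The gains `h * x` from holding an `m`-measurable position `h` in a payoff `x`. -/
def measurableMultiples (m : MeasurableSpace Ω) (x : Ω → ℝ) : Submodule ℝ (Ω → ℝ) where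
  carrier := {v | ∃ h : Ω → ℝ, Measurable[m] h ∧ v = h * x}
  zero_mem' := ⟨0, measurable_const, (zero_mul x).symm⟩
  add_mem' := by
    rintro _ _ ⟨h, hh, rfl⟩ ⟨k, hk, rfl⟩
    exact ⟨h + k, hh.add hk, (add_mul h k x).symm⟩
  smul_mem' := by
    rintro c _ ⟨h, hh, rfl⟩
    exact ⟨c • h, hh.const_smul c, (smul_mul_assoc c h x).symm⟩

lemma measurableMultiples_bot (x : Ω → ℝ) : measurableMultiples ⊥ x = Submodule.span ℝ {x} := by
  ext v
  rw [Submodule.mem_span_singleton]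
  constructor
  · rintro ⟨h, hh, rfl⟩
    obtain ⟨c, rfl⟩ := eq_const_of_measurable_bot hh
    exact ⟨c, rfl⟩
  · rintro ⟨c, rfl⟩
    exact ⟨fun _ => c, measurable_const, rfl⟩

lemma mem_sup_measurableMultiples {v : Ω → ℝ} :
    v ∈ L ⊔ measurableMultiples m x ↔
      ∃ w ∈ L, ∃ h : Ω → ℝ, Measurable[m] h ∧ v = w + h * x := by
  rw [Submodule.mem_sup]
  constructor
  · rintro ⟨w, hw, _, ⟨h, hh, rfl⟩, rfl⟩
    exact ⟨w, hw, h, hh, rfl⟩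
  · rintro ⟨w, hw, h, hh, rfl⟩
    exact ⟨w, hw, h * x, ⟨h, hh, rfl⟩, rfl⟩

lemma isStable_bot_left (L : Submodule ℝ (Ω → ℝ)) : IsStable ⊥ L where
  mul_mem := by
    intro h hh w hw
    obtain ⟨c, rfl⟩ := eq_const_of_measurable_bot hh
    exact L.smul_mem c hw
  glue_mem := by
    intro w hw σ hσ
    obtain ⟨n, rfl⟩ := eq_const_of_measurable_bot hσ
    exact hw n

lemma isStable_bot_right (m : MeasurableSpace Ω) : IsStable m (⊥ : Submodule ℝ (Ω → ℝ)) where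
  mul_mem := by
    intro h _ w hw
    rw [(Submodule.mem_bot ℝ).1 hw, mul_zero]
    exact Submodule.zero_mem _
  glue_mem := by
    intro w hw σ _
    simp only [Submodule.mem_bot] at hw
    simp only [hw]
    exact Submodule.zero_mem _

lemma IsStable.anti {m' : MeasurableSpace Ω} (hL : IsStable m L) (hm : m' ≤ m) :
    IsStable m' L where
  mul_mem _ hh := hL.mul_mem (hh.mono hm le_rfl)
  glue_mem _ hw _ hσ := hL.glue_mem hw (hσ.mono hm le_rfl)

lemma IsStable.sup_measurableMultiples (hL : IsStable m L) (x : Ω → ℝ) :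
    IsStable m (L ⊔ measurableMultiples m x) where
  mul_mem := by
    intro k hk v hv
    obtain ⟨w, hw, h, hh, rfl⟩ := mem_sup_measurableMultiples.1 hv
    exact mem_sup_measurableMultiples.2
      ⟨k * w, hL.mul_mem hk hw, k * h, hk.mul hh, by rw [mul_add, mul_assoc]⟩
  glue_mem := by
    intro v hv σ hσ
    choose w hw h hh hv using fun n => mem_sup_measurableMultiples.1 (hv n)
    exact mem_sup_measurableMultiples.2
      ⟨_, hL.glue_mem hw hσ, _, measurable_glue hh hσ, funext fun ω => congrFun (hv (σ ω)) ω⟩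

/-- Bolzano–Weierstrass for the positions `h n`, which are compactified by `arctan` because they
may be unbounded. -/
lemma IsStable.exists_subseq_tendsto_arctan [CountableInterFilter l] (hL : IsStable m L)
    {g : ℕ → Ω → ℝ} {g' : Ω → ℝ} (hg : ∀ n, g n ∈ superhedgeable l (L ⊔ measurableMultiples m x))
    (hlim : ∀ᶠ ω in l, Tendsto (fun n => g n ω) atTop (𝓝 (g' ω))) :
    ∃ (γ w h : ℕ → Ω → ℝ) (θ : Ω → ℝ), (∀ k, w k ∈ L) ∧ (∀ k, Measurable[m] (h k)) ∧
      Measurable[m] θ ∧ (∀ k, γ k ≤ᶠ[l] w k + h k * x) ∧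
      (∀ᶠ ω in l, Tendsto (fun k => γ k ω) atTop (𝓝 (g' ω))) ∧
      ∀ ω, Tendsto (fun k => Real.arctan (h k ω)) atTop (𝓝 (θ ω)) := by
  choose v hv hgv using hg
  choose w hw h hh hv using fun n => mem_sup_measurableMultiples.1 (hv n)
  have hbdd (ω : Ω) (n : ℕ) : |Real.arctan (h n ω)| ≤ Real.pi / 2 :=
    abs_le.2 ⟨(Real.neg_pi_div_two_lt_arctan _).le, (Real.arctan_lt_pi_div_two _).le⟩
  obtain ⟨σ, θ, hσ, hθ, hkσ, hlimθ⟩ := exists_measurable_subseq_tendsto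
    (fun n => (hh n).arctan) fun ω => ⟨_, hbdd ω⟩
  refine ⟨fun k ω => g (σ k ω) ω, fun k ω => w (σ k ω) ω, fun k ω => h (σ k ω) ω, θ,
    fun k => hL.glue_mem hw (hσ k), fun k => measurable_glue hh (hσ k), hθ, fun k => ?_, ?_, hlimθ⟩
  · filter_upwards [eventually_countable_forall.2 hgv] with ω hω
    exact (hω (σ k ω)).trans_eq (congrFun (hv (σ k ω)) ω)
  · filter_upwards [hlim] with ω hω
    exact hω.comp (tendsto_atTop_mono (fun k => hkσ k ω) tendsto_id)

/-- Dividing `γ k ≤ w k + h k * x` by `√(1 + (h k)²)` turns the positions into points of the unit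
circle, whose limit is `(cos θ, sin θ)`. -/
lemma SuperhedgeClosed.cos_mul_sub_sin_mul_mem (hcl : SuperhedgeClosed l L) (hL : IsStable m L)
    {γ w h : ℕ → Ω → ℝ} {g θ : Ω → ℝ} (hw : ∀ k, w k ∈ L) (hh : ∀ k, Measurable[m] (h k))
    (hγ : ∀ k, γ k ≤ᶠ[l] w k + h k * x)
    (hlim : ∀ᶠ ω in l, Tendsto (fun k => γ k ω) atTop (𝓝 (g ω)))
    (hθ : ∀ ω, Tendsto (fun k => Real.arctan (h k ω)) atTop (𝓝 (θ ω))) :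
    (fun ω => Real.cos (θ ω) * g ω - Real.sin (θ ω) * x ω) ∈ superhedgeable l L := by
  refine hcl (g := fun k ω => Real.cos (Real.arctan (h k ω)) * γ k ω
    - Real.sin (Real.arctan (h k ω)) * x ω) (fun k => ?_) ?_
  · refine ⟨_, hL.mul_mem (hh k).arctan.cos (hw k), ?_⟩
    filter_upwards [hγ k] with ω hω
    have hcos := Real.cos_arctan_pos (h k ω)
    have hsin : Real.sin (Real.arctan (h k ω)) = Real.cos (Real.arctan (h k ω)) * h k ω := by
      rw [mul_comm, ← Real.tan_mul_cos hcos.ne', Real.tan_arctan]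
    have := mul_le_mul_of_nonneg_left hω hcos.le
    simp only [Pi.add_apply, Pi.mul_apply, hsin] at this ⊢
    linarith
  · filter_upwards [hlim] with ω hω
    exact (((Real.continuous_cos.tendsto _).comp (hθ ω)).mul hω).sub
      (((Real.continuous_sin.tendsto _).comp (hθ ω)).mul_const _)

/-- If a nonzero position in `x` yields a nonnegative gain on the event `A`, then on `A` it
replicates zero, so `x` is redundant there. -/
lemma NoArbitrage.exists_indicator_eq (hNA : NoArbitrage l (L ⊔ measurableMultiples m x))
    (hL : IsStable m L) {A : Set Ω} (hA : MeasurableSet[m] A) {s w : Ω → ℝ}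
    (hs : Measurable[m] s) (hsA : ∀ ω ∈ A, s ω ≠ 0) (hw : w ∈ L)
    (hnonneg : ∀ᶠ ω in l, ω ∈ A → 0 ≤ w ω + s ω * x ω) :
    ∃ v ∈ L, A.indicator x =ᶠ[l] v := by
  have hone : Measurable[m] (A.indicator (1 : Ω → ℝ)) := measurable_one.indicator hA
  have hzero := hNA (v := A.indicator 1 * w + A.indicator 1 * s * x)
    (mem_sup_measurableMultiples.2 ⟨_, hL.mul_mem hone hw, _, hone.mul hs, rfl⟩) (by
      filter_upwards [hnonneg] with ω hω
      by_cases hωA : ω ∈ A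
      · simpa [hωA] using hω hωA
      · simp [hωA])
  refine ⟨A.indicator (-s⁻¹) * w, hL.mul_mem (hs.inv.neg.indicator hA) hw, ?_⟩
  filter_upwards [hzero] with ω hω
  by_cases hωA : ω ∈ A
  · have hsω := hsA ω hωA
    simp only [Pi.add_apply, Pi.mul_apply, Pi.neg_apply, Pi.inv_apply, Pi.zero_apply,
      Set.indicator_of_mem hωA, Pi.one_apply, one_mul] at hω ⊢
    field_simp
    linarith
  · simp [hωA]

lemma SuperhedgeClosed.indicator_mem_of_indicator_eq (hcl : SuperhedgeClosed l L)
    (hL : IsStable m L) {A : Set Ω} (hA : MeasurableSet[m] A) {v : Ω → ℝ} (hv : v ∈ L)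
    (hxv : A.indicator x =ᶠ[l] v) {γ w h : ℕ → Ω → ℝ} {g : Ω → ℝ} (hw : ∀ k, w k ∈ L)
    (hh : ∀ k, Measurable[m] (h k)) (hγ : ∀ k, γ k ≤ᶠ[l] w k + h k * x)
    (hlim : ∀ᶠ ω in l, Tendsto (fun k => γ k ω) atTop (𝓝 (g ω))) :
    A.indicator g ∈ superhedgeable l L := by
  have hone : Measurable[m] (A.indicator (1 : Ω → ℝ)) := measurable_one.indicator hA
  refine hcl (g := fun k => A.indicator (γ k)) (fun k => ?_) ?_
  · refine ⟨A.indicator 1 * w k + h k * v,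
      L.add_mem (hL.mul_mem hone (hw k)) (hL.mul_mem (hh k) hv), ?_⟩
    filter_upwards [hγ k, hxv] with ω hω hxω
    by_cases hωA : ω ∈ A
    · simpa [hωA, ← hxω] using hω
    · simp [hωA, ← hxω]
  · filter_upwards [hlim] with ω hω
    by_cases hωA : ω ∈ A
    · simpa [hωA] using hω
    · simp [hωA]

theorem SuperhedgeClosed.sup_measurableMultiples [CountableInterFilter l]
    (hcl : SuperhedgeClosed l L) (hL : IsStable m L)
    (hNA : NoArbitrage l (L ⊔ measurableMultiples m x)) :
    SuperhedgeClosed l (L ⊔ measurableMultiples m x) := by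
  intro g g' hg hlim
  obtain ⟨γ, w, h, θ, hw, hh, hθ, hγ, hlimγ, hlimθ⟩ := hL.exists_subseq_tendsto_arctan hg hlim
  obtain ⟨w₁, hw₁, hle₁⟩ := hcl.cos_mul_sub_sin_mul_mem hL hw hh hγ hlimγ hlimθ
  let A : Set Ω := {ω | Real.cos (θ ω) = 0}
  have hA : MeasurableSet[m] A := hθ.cos (measurableSet_singleton 0)
  obtain ⟨v, hv, hxv⟩ := hNA.exists_indicator_eq hL hA hθ.sin
    (fun ω (hω : Real.cos (θ ω) = 0) hsin => by
      simpa [hω, hsin] using Real.sin_sq_add_cos_sq (θ ω)) hw₁ (by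
    filter_upwards [hle₁] with ω hω (hωA : Real.cos (θ ω) = 0)
    rw [hωA] at hω
    linarith)
  obtain ⟨w₂, hw₂, hle₂⟩ := hcl.indicator_mem_of_indicator_eq hL hA hv hxv hw hh hγ hlimγ
  have hcos : ∀ ω, 0 ≤ Real.cos (θ ω) := fun ω =>
    ge_of_tendsto' ((Real.continuous_cos.tendsto _).comp (hlimθ ω))
      fun k => (Real.cos_arctan_pos (h k ω)).le
  refine ⟨_, mem_sup_measurableMultiples.2 ⟨_, L.add_mem (hL.mul_mem hθ.cos.inv hw₁) hw₂, _,
    hθ.cos.inv.mul hθ.sin, rfl⟩, ?_⟩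
  filter_upwards [hle₁, hle₂] with ω hω₁ hω₂
  simp only [Pi.add_apply, Pi.mul_apply, Pi.inv_apply]
  by_cases hωA : Real.cos (θ ω) = 0
  · rw [Set.indicator_of_mem (show ω ∈ A from hωA)] at hω₂
    simpa [hωA] using hω₂
  · rw [Set.indicator_of_notMem (show ω ∉ A from hωA)] at hω₂
    have hpos : 0 < Real.cos (θ ω) := (hcos ω).lt_of_ne' hωA
    have : g' ω ≤ (Real.cos (θ ω))⁻¹ * (w₁ ω + Real.sin (θ ω) * x ω) := by
      rw [inv_mul_eq_div, le_div_iff₀ hpos]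
      linarith
    linarith

theorem SuperhedgeClosed.sup_of_fg [CountableInterFilter l] {V : Submodule ℝ (Ω → ℝ)}
    (hV : V.FG) (hcl : SuperhedgeClosed l L) (hNA : NoArbitrage l (L ⊔ V)) :
    SuperhedgeClosed l (L ⊔ V) := by
  induction V, hV using Submodule.fg_induction generalizing L with
  | singleton x =>
    rw [← measurableMultiples_bot] at hNA ⊢
    exact hcl.sup_measurableMultiples (isStable_bot_left L) hNA
  | sup V₁ V₂ _ _ ih₁ ih₂ =>
    rw [← sup_assoc] at hNA ⊢
    exact ih₂ (ih₁ hcl (hNA.mono le_sup_left)) hNA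

lemma mem_iSup_measurableMultiples {ι : Type*} {m : ι → MeasurableSpace Ω} {x : ι → Ω → ℝ}
    {S : Finset ι} {v : Ω → ℝ} :
    v ∈ ⨆ k ∈ S, measurableMultiples (m k) (x k) ↔
      ∃ h : ι → Ω → ℝ, (∀ k ∈ S, Measurable[m k] (h k)) ∧ v = ∑ k ∈ S, h k * x k := by
  constructor
  · intro hv
    obtain ⟨μ, rfl⟩ := (Submodule.mem_iSup_finset_iff_exists_sum _ _).1 hv
    choose h hh hμ using fun k => (μ k).2
    exact ⟨h, fun k _ => hh k, Finset.sum_congr rfl fun k _ => hμ k⟩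
  · rintro ⟨h, hh, rfl⟩
    exact Submodule.sum_mem _ fun k hk =>
      Submodule.mem_iSup_of_mem k <| Submodule.mem_iSup_of_mem hk ⟨h k, hh k hk, rfl⟩

/-- The payoffs are adjoined backwards in time: what is already there is then stable under the
coarser information of the payoff being added. -/
theorem superhedgeClosed_iSup_measurableMultiples [CountableInterFilter l] {ι τ : Type*}
    [LinearOrder τ] {M : τ → MeasurableSpace Ω} (hM : Monotone M) (d : ι → τ) (x : ι → Ω → ℝ)
    (S : Finset ι) (hNA : NoArbitrage l (⨆ k ∈ S, measurableMultiples (M (d k)) (x k))) :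
    SuperhedgeClosed l (⨆ k ∈ S, measurableMultiples (M (d k)) (x k)) := by
  classical
  suffices SuperhedgeClosed l (⨆ k ∈ S, measurableMultiples (M (d k)) (x k)) ∧
      ∀ t, (∀ k ∈ S, t ≤ d k) →
        IsStable (M t) (⨆ k ∈ S, measurableMultiples (M (d k)) (x k)) from this.1
  induction S using Finset.induction_on_min_value d with
  | empty => simpa using ⟨superhedgeClosed_bot, fun t => isStable_bot_right (M t)⟩
  | insert a S _ hmin ih =>
    rw [Finset.iSup_insert, sup_comm] at hNA ⊢
    obtain ⟨hcl, hstable⟩ := ih (hNA.mono le_sup_left)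
    have hstable := hstable (d a) hmin
    exact ⟨hcl.sup_measurableMultiples hstable hNA, fun t ht =>
      (hstable.sup_measurableMultiples (x a)).anti (hM (ht a (Finset.mem_insert_self a S)))⟩

end Adjunction

section Prices

theorem sSup_coe_image_eq_sInf_coe_image_iff {A B : Set ℝ} (hA : IsClosed A) (hB : IsClosed B)
    (hA_bdd : BddBelow A) (hB_bdd : BddAbove B) (hBA : ∀ b ∈ B, ∀ a ∈ A, b ≤ a) :
    sSup ((↑) '' B : Set EReal) = sInf ((↑) '' A : Set EReal) ↔ (A ∩ B).Nonempty := by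
  have hmono : Monotone ((↑) : ℝ → EReal) := EReal.coe_strictMono.monotone
  have hsInf : A.Nonempty → sInf ((↑) '' A : Set EReal) = (sInf A : ℝ) := fun h =>
    (hmono.map_isLeast (hA.isLeast_csInf h hA_bdd)).isGLB.sInf_eq
  have hsSup : B.Nonempty → sSup ((↑) '' B : Set EReal) = (sSup B : ℝ) := fun h =>
    (hmono.map_isGreatest (hB.isGreatest_csSup h hB_bdd)).isLUB.sSup_eq
  constructor
  · intro heq
    rcases A.eq_empty_or_nonempty with rfl | hA_ne <;>
      rcases B.eq_empty_or_nonempty with rfl | hB_ne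
    · simp at heq
    · simp [hsSup hB_ne] at heq
    · simp [hsInf hA_ne] at heq
    · rw [hsSup hB_ne, hsInf hA_ne, EReal.coe_eq_coe_iff] at heq
      exact ⟨sInf A, hA.csInf_mem hA_ne hA_bdd, heq ▸ hB.csSup_mem hB_ne hB_bdd⟩
  · rintro ⟨c, hcA, hcB⟩
    have hA_least : IsLeast A c := ⟨hcA, fun a ha => hBA c hcB a ha⟩
    have hB_greatest : IsGreatest B c := ⟨hcB, fun b hb => hBA b hb c hcA⟩
    rw [(hmono.map_isGreatest hB_greatest).isLUB.sSup_eq,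
      (hmono.map_isLeast hA_least).isGLB.sInf_eq]

variable {l : Filter Ω} {L : Submodule ℝ (Ω → ℝ)} {f u : Ω → ℝ}

/-- The initial capitals, in units of the numéraire `u`, from which `f` can be superhedged. -/
def superhedgingCapitals (l : Filter Ω) (L : Submodule ℝ (Ω → ℝ)) (u f : Ω → ℝ) : Set ℝ :=
  {c | f - c • u ∈ superhedgeable l L}

/-- The initial capitals, in units of the numéraire `u`, from which `f` can be subhedged. -/
def subhedgingCapitals (l : Filter Ω) (L : Submodule ℝ (Ω → ℝ)) (u f : Ω → ℝ) : Set ℝ :=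
  {c | c • u - f ∈ superhedgeable l L}

lemma mem_superhedgingCapitals {c : ℝ} :
    c ∈ superhedgingCapitals l L u f ↔ ∃ w ∈ L, f ≤ᶠ[l] c • u + w := by
  refine exists_congr fun w => and_congr_right fun _ => eventually_congr (.of_forall fun ω => ?_)
  exact sub_le_iff_le_add'

lemma mem_subhedgingCapitals {c : ℝ} :
    c ∈ subhedgingCapitals l L u f ↔ ∃ w ∈ L, c • u + w ≤ᶠ[l] f := by
  constructor <;> rintro ⟨w, hw, h⟩ <;> refine ⟨-w, L.neg_mem hw, h.mono fun ω hω => ?_⟩ <;>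
    simp only [Pi.add_apply, Pi.sub_apply, Pi.neg_apply] at hω ⊢ <;> linarith

lemma subhedgingCapitals_eq_neg_preimage :
    subhedgingCapitals l L u f = Neg.neg ⁻¹' superhedgingCapitals l L u (-f) := by
  ext c
  simp only [subhedgingCapitals, superhedgingCapitals, Set.mem_ofPred_eq, Set.mem_preimage,
    neg_smul, sub_neg_eq_add, neg_add_eq_sub]

lemma SuperhedgeClosed.isClosed_superhedgingCapitals (hcl : SuperhedgeClosed l L)
    (u f : Ω → ℝ) : IsClosed (superhedgingCapitals l L u f) := by
  refine IsSeqClosed.isClosed fun c a hc hca => hcl hc (.of_forall fun ω => ?_)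
  exact (hca.mul_const (u ω)).const_sub (f ω)

lemma NoArbitrage.notMem_superhedgeable (hNA : NoArbitrage l L) (hu : 0 ≤ᶠ[l] u)
    (hu_ne : ¬ u =ᶠ[l] 0) : u ∉ superhedgeable l L :=
  fun h => hu_ne (hNA.eq_zero h hu)

/-- If `f` were superhedgeable from capitals `c n → -∞`, then so would be `(-c n)⁻¹ • f + u` from
zero capital, and hence its limit `u`. -/
lemma SuperhedgeClosed.bddBelow_superhedgingCapitals (hcl : SuperhedgeClosed l L)
    (hu : u ∉ superhedgeable l L) (f : Ω → ℝ) : BddBelow (superhedgingCapitals l L u f) := by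
  by_contra hbdd
  choose c hc hlt using fun n : ℕ => not_bddBelow_iff.1 hbdd (-((n : ℝ) + 1))
  have hpos (n : ℕ) : 0 < -c n := by
    have : (0 : ℝ) ≤ n := n.cast_nonneg
    linarith [hlt n]
  have hlim : Tendsto (fun n => (-c n)⁻¹) atTop (𝓝 0) :=
    tendsto_inv_atTop_zero.comp <| tendsto_atTop_mono
      (fun n => by linarith [hlt n]) tendsto_natCast_atTop_atTop
  refine hu (hcl (fun n => smul_mem_superhedgeable (inv_pos.2 (hpos n)).le (hc n))
    (.of_forall fun ω => ?_))
  have hscale (n : ℕ) : ((-c n)⁻¹ • (f - c n • u)) ω = (-c n)⁻¹ * f ω + u ω := by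
    simp only [Pi.smul_apply, Pi.sub_apply, smul_eq_mul]
    linear_combination u ω * inv_mul_cancel₀ (hpos n).ne'
  simpa only [hscale, zero_mul, zero_add] using (hlim.mul_const (f ω)).add_const (u ω)

lemma le_of_mem_hedgingCapitals (hu : u ∉ superhedgeable l L) {a b : ℝ}
    (hb : b ∈ subhedgingCapitals l L u f) (ha : a ∈ superhedgingCapitals l L u f) : b ≤ a := by
  by_contra! hab
  refine hu ?_
  have hsum : (b - a)⁻¹ • ((b • u - f) + (f - a • u)) = u := by
    rw [sub_add_sub_cancel, ← sub_smul, inv_smul_smul₀ (sub_pos.2 hab).ne']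
  exact hsum ▸ smul_mem_superhedgeable (inv_pos.2 (sub_pos.2 hab)).le
    (add_mem_superhedgeable hb ha)

lemma NoArbitrage.mem_inter_hedgingCapitals_iff (hNA : NoArbitrage l L) {c : ℝ} :
    c ∈ superhedgingCapitals l L u f ∩ subhedgingCapitals l L u f ↔
      ∃ w ∈ L, f =ᶠ[l] c • u + w := by
  rw [Set.mem_inter_iff, mem_superhedgingCapitals, mem_subhedgingCapitals]
  constructor
  · rintro ⟨⟨v, hv, hfv⟩, w, hw, hwf⟩
    have hvw : v - w =ᶠ[l] 0 := hNA (L.sub_mem hv hw) (by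
      filter_upwards [hwf, hfv] with ω hwfω hfvω
      exact sub_nonneg.2 (le_of_add_le_add_left (hwfω.trans hfvω)))
    refine ⟨v, hv, hfv.antisymm ?_⟩
    filter_upwards [hwf, hvw] with ω hω hvwω
    rwa [Pi.add_apply, sub_eq_zero.1 hvwω]
  · rintro ⟨w, hw, hfw⟩
    exact ⟨⟨w, hw, hfw.le⟩, w, hw, hfw.symm.le⟩

theorem sSup_subhedgingCapitals_eq_sInf_superhedgingCapitals_iff (hcl : SuperhedgeClosed l L)
    (hNA : NoArbitrage l L) (hu : 0 ≤ᶠ[l] u) (hu_ne : ¬ u =ᶠ[l] 0) :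
    sSup ((↑) '' subhedgingCapitals l L u f : Set EReal) =
        sInf ((↑) '' superhedgingCapitals l L u f : Set EReal) ↔
      ∃ c : ℝ, ∃ w ∈ L, f =ᶠ[l] c • u + w := by
  have hu_notMem := hNA.notMem_superhedgeable hu hu_ne
  rw [sSup_coe_image_eq_sInf_coe_image_iff (hcl.isClosed_superhedgingCapitals u f) ?_
    (hcl.bddBelow_superhedgingCapitals hu_notMem f) ?_
    fun b hb a ha => le_of_mem_hedgingCapitals hu_notMem hb ha]
  · exact exists_congr fun c => hNA.mem_inter_hedgingCapitals_iff
  · rw [subhedgingCapitals_eq_neg_preimage]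
    exact (hcl.isClosed_superhedgingCapitals u (-f)).preimage continuous_neg
  · rw [subhedgingCapitals_eq_neg_preimage, Set.neg_preimage, bddAbove_neg]
    exact hcl.bddBelow_superhedgingCapitals hu_notMem (-f)

end Prices

section Market

variable {J N R T : ℕ} {F : Fin N → ℕ → MeasurableSpace Ω} {assets : Fin N → Finset (Fin J)}
  {X : Fin J → ℕ → Ω → ℝ} {Ys : Fin R → Fin N → Ω → ℝ}

/-- The σ-algebra on `Fin N × Ω` that describes the information of all agents at once: its section
at agent `i` is `G i`. A random vector is thereby a single function on `Fin N × Ω`. -/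
@[reducible] def collectiveSigma (G : Fin N → MeasurableSpace Ω) : MeasurableSpace (Fin N × Ω) :=
  ⨅ i, (G i).map (Prod.mk i)

lemma measurable_collectiveSigma_iff {G : Fin N → MeasurableSpace Ω} {h : Fin N × Ω → ℝ} :
    Measurable[collectiveSigma G] h ↔ ∀ i, Measurable[G i] fun ω => h (i, ω) :=
  ⟨fun hh i _ hs => MeasurableSpace.measurableSet_iInf.1 (hh hs) i,
    fun hh _ hs => MeasurableSpace.measurableSet_iInf.2 fun i => hh i hs⟩

lemma collectiveSigma_mono : Monotone (collectiveSigma : (Fin N → MeasurableSpace Ω) → _) :=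
  fun _ _ h => iInf_mono fun i => MeasurableSpace.map_mono (h i)

/-- The filter on `Fin N × Ω` along which a property holds eventually when it holds `P`-almost
surely for every agent. -/
abbrev collectiveAE (N : ℕ) [MeasurableSpace Ω] (P : Measure Ω) : Filter (Fin N × Ω) :=
  comap Prod.snd (ae P)

lemma eventually_collectiveAE [MeasurableSpace Ω] {P : Measure Ω} {p : Fin N × Ω → Prop} :
    (∀ᶠ q in collectiveAE N P, p q) ↔ ∀ i, ∀ᵐ ω ∂P, p (i, ω) := by
  rw [eventually_comap, ← ae_all_iff]
  refine eventually_congr (.of_forall fun ω => ⟨fun h i => h (i, ω) rfl, ?_⟩)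
  rintro h ⟨i, _⟩ rfl
  exact h i

/-- The increment of asset `j` over `(s - 1, s]`, as seen by the agents who trade it. -/
def tradedIncrement (assets : Fin N → Finset (Fin J)) (X : Fin J → ℕ → Ω → ℝ) (a : Fin J × ℕ) :
    Fin N × Ω → ℝ :=
  fun q => if a.1 ∈ assets q.1 then X a.1 a.2 q.2 - X a.1 (a.2 - 1) q.2 else 0

/-- The product `K₁ × ⋯ × K_N` of the agents' spaces of gains. -/
def tradingGains (F : Fin N → ℕ → MeasurableSpace Ω) (T : ℕ) (assets : Fin N → Finset (Fin J))
    (X : Fin J → ℕ → Ω → ℝ) : Submodule ℝ (Fin N × Ω → ℝ) :=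
  ⨆ a ∈ Finset.univ ×ˢ Finset.Icc 1 T,
    measurableMultiples (collectiveSigma fun i => F i (a.2 - 1)) (tradedIncrement assets X a)

/-- The space `𝒴` of exchanges, as the image of the coefficients `(x, c)` of its elements. -/
def exchangeSpace (Ys : Fin R → Fin N → Ω → ℝ) : Submodule ℝ (Fin N × Ω → ℝ) :=
  Submodule.map
    (LinearMap.pi fun q => LinearMap.coprod (LinearMap.proj q.1)
      (∑ r, Ys r q.1 q.2 • LinearMap.proj r))
    (Submodule.prod (LinearMap.ker (∑ i, LinearMap.proj i : (Fin N → ℝ) →ₗ[ℝ] ℝ))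
      (⊤ : Submodule ℝ (Fin R → ℝ)))

/-- The space `K₁ × ⋯ × K_N + 𝒴` of gains from trading and exchanges. -/
def collectiveGains (F : Fin N → ℕ → MeasurableSpace Ω) (T : ℕ) (assets : Fin N → Finset (Fin J))
    (X : Fin J → ℕ → Ω → ℝ) (Ys : Fin R → Fin N → Ω → ℝ) : Submodule ℝ (Fin N × Ω → ℝ) :=
  tradingGains F T assets X ⊔ exchangeSpace Ys

lemma sum_mul_tradedIncrement (H : Fin J × ℕ → ℝ) (q : Fin N × Ω) :
    ∑ a ∈ Finset.univ ×ˢ Finset.Icc 1 T, H a * tradedIncrement assets X a q =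
      ∑ j ∈ assets q.1, ∑ s ∈ Finset.Icc 1 T, H (j, s) * (X j s q.2 - X j (s - 1) q.2) := by
  rw [Finset.sum_product, ← Finset.sum_subset (Finset.subset_univ (assets q.1))]
  · exact Finset.sum_congr rfl fun j hj => by simp only [tradedIncrement, hj, if_true]
  · exact fun j _ hj => by
      simp only [tradedIncrement, hj, if_false, mul_zero, Finset.sum_const_zero]

lemma mem_tradingGains {v : Fin N × Ω → ℝ} :
    v ∈ tradingGains F T assets X ↔ ∀ i, Function.curry v i ∈ gainsSet (F i) T (assets i) X := by
  rw [tradingGains, mem_iSup_measurableMultiples]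
  constructor
  · rintro ⟨h, hh, rfl⟩ i
    refine ⟨fun j s ω => h (j, s) (i, ω), fun j _ s h1 hs => ?_, funext fun ω => ?_⟩
    · exact measurable_collectiveSigma_iff.1
        (hh (j, s) (by simp only [Finset.mem_product, Finset.mem_univ, Finset.mem_Icc, h1, hs,
          and_self])) i
    · simpa only [Function.curry, Finset.sum_apply, Pi.mul_apply] using
        sum_mul_tradedIncrement (fun a => h a (i, ω)) (i, ω)
  · intro hv
    choose H hH hvH using hv
    refine ⟨fun a q => if a.1 ∈ assets q.1 then H q.1 a.1 a.2 q.2 else 0, fun a ha => ?_,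
      funext fun q => ?_⟩
    · obtain ⟨h1, hT⟩ := Finset.mem_Icc.1 (Finset.mem_product.1 ha).2
      refine measurable_collectiveSigma_iff.2 fun i => ?_
      by_cases hi : a.1 ∈ assets i
      · simpa only [hi, if_true] using hH i a.1 hi a.2 h1 hT
      · simpa only [hi, if_false] using measurable_const
    · simp only [Finset.sum_apply, Pi.mul_apply]
      rw [sum_mul_tradedIncrement (fun a => if a.1 ∈ assets q.1 then H q.1 a.1 a.2 q.2 else 0)]
      refine (congrFun (hvH q.1) q.2).trans (Finset.sum_congr rfl fun j hj => ?_)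
      simp only [hj, if_true]

lemma mem_exchangeSpace {v : Fin N × Ω → ℝ} :
    v ∈ exchangeSpace Ys ↔ Function.curry v ∈ spanExch Ys := by
  constructor
  · rintro ⟨⟨x, c⟩, ⟨hx, -⟩, rfl⟩
    refine ⟨x, c, by simpa using hx, fun i => funext fun ω => ?_⟩
    simp [Function.curry, mul_comm]
  · rintro ⟨x, c, hx, hv⟩
    refine ⟨(x, c), ⟨by simpa using hx, trivial⟩, funext fun q => ?_⟩
    rw [show v q = _ from congrFun (hv q.1) q.2]
    simp [mul_comm]

lemma exchangeSpace_fg (Ys : Fin R → Fin N → Ω → ℝ) : (exchangeSpace Ys).FG :=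
  (IsNoetherian.noetherian _).map _

lemma const_mem_exchangeSpace {x : Fin N → ℝ} (hx : ∑ i, x i = 0) :
    (fun q => x q.1) ∈ exchangeSpace Ys :=
  mem_exchangeSpace.2 ⟨x, 0, hx, fun i => funext fun ω => by simp [Function.curry]⟩

lemma neg_mem_spanExch {y : Fin N → Ω → ℝ} (hy : y ∈ spanExch Ys) : -y ∈ spanExch Ys :=
  mem_exchangeSpace.1 <| Submodule.neg_mem _ <|
    (mem_exchangeSpace (v := Function.uncurry y)).2 hy

lemma mem_collectiveGains {v : Fin N × Ω → ℝ} :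
    v ∈ collectiveGains F T assets X Ys ↔
      ∃ k : Fin N → Ω → ℝ, (∀ i, k i ∈ gainsSet (F i) T (assets i) X) ∧
        ∃ y ∈ spanExch Ys, v = fun q => k q.1 q.2 + y q.1 q.2 := by
  rw [collectiveGains, Submodule.mem_sup]
  constructor
  · rintro ⟨k, hk, y, hy, rfl⟩
    exact ⟨_, mem_tradingGains.1 hk, _, mem_exchangeSpace.1 hy, rfl⟩
  · rintro ⟨k, hk, y, hy, rfl⟩
    exact ⟨Function.uncurry k, mem_tradingGains.2 hk, Function.uncurry y, mem_exchangeSpace.2 hy,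
      rfl⟩

variable [MeasurableSpace Ω] {P : Measure Ω} {f : Fin N → Ω → ℝ}

lemma NCA.noArbitrage (hNCA : NCA P (fun i => gainsSet (F i) T (assets i) X) (spanExch Ys)) :
    NoArbitrage (collectiveAE N P) (collectiveGains F T assets X Ys) := by
  intro v hv hv0
  obtain ⟨k, hk, y, hy, rfl⟩ := mem_collectiveGains.1 hv
  exact eventually_collectiveAE.2 (hNCA k y hy hk (eventually_collectiveAE.1 hv0))

theorem superhedgeClosed_collectiveGains (hF : ∀ i, Monotone (F i))
    (hNA : NoArbitrage (collectiveAE N P) (collectiveGains F T assets X Ys)) :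
    SuperhedgeClosed (collectiveAE N P) (collectiveGains F T assets X Ys) := by
  have hM : Monotone fun t => collectiveSigma fun i => F i (t - 1) :=
    fun _ _ hst => collectiveSigma_mono fun i => hF i (Nat.sub_le_sub_right hst 1)
  exact (superhedgeClosed_iSup_measurableMultiples hM Prod.snd (tradedIncrement assets X) _
    (hNA.mono le_sup_left)).sup_of_fg (exchangeSpace_fg Ys) hNA

/-- A zero-sum transfer redistributes the initial capitals equally among the agents. -/
lemma exists_capital_iff [NeZero N] (r : ℝ → ℝ → Prop) (c : ℝ) :
    (∃ m : Fin N → ℝ, c = ∑ i, m i ∧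
      ∃ k : Fin N → Ω → ℝ, (∀ i, k i ∈ gainsSet (F i) T (assets i) X) ∧
        ∃ y ∈ spanExch Ys, ∀ i, ∀ᵐ ω ∂P, r (f i ω) (m i + k i ω + y i ω)) ↔
    ∃ w ∈ collectiveGains F T assets X Ys, ∀ᶠ q in collectiveAE N P,
      r (Function.uncurry f q) ((c • (fun _ => (N : ℝ)⁻¹ : Fin N × Ω → ℝ) + w) q) := by
  have hsum (c : ℝ) : ∑ _i : Fin N, c * (N : ℝ)⁻¹ = c := by
    rw [Finset.sum_const, Finset.card_univ, Fintype.card_fin, nsmul_eq_mul, mul_left_comm,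
      mul_inv_cancel₀ (NeZero.ne _), mul_one]
  constructor
  · rintro ⟨m, rfl, k, hk, y, hy, hr⟩
    have htransfer : ∑ i, (m i - (∑ j, m j) * (N : ℝ)⁻¹) = 0 := by
      rw [Finset.sum_sub_distrib, hsum, sub_self]
    refine ⟨_, Submodule.add_mem _ (mem_collectiveGains.2 ⟨k, hk, y, hy, rfl⟩)
      (Submodule.mem_sup_right (const_mem_exchangeSpace htransfer)), ?_⟩
    refine eventually_collectiveAE.2 fun i => (hr i).mono fun ω hω => ?_
    simp only [Function.uncurry, Pi.add_apply, Pi.smul_apply, smul_eq_mul]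
    convert hω using 1
    ring
  · rintro ⟨w, hw, hr⟩
    obtain ⟨k, hk, y, hy, rfl⟩ := mem_collectiveGains.1 hw
    refine ⟨fun _ => c * (N : ℝ)⁻¹, (hsum c).symm, k, hk, y, hy, fun i => ?_⟩
    filter_upwards [eventually_collectiveAE.1 hr i] with ω hω
    simpa only [Function.uncurry, Pi.add_apply, Pi.smul_apply, smul_eq_mul, add_assoc] using hω

lemma rhoPlus_eq_sInf [NeZero N] :
    rhoPlus P (fun i => gainsSet (F i) T (assets i) X) (spanExch Ys) f =
      sInf ((↑) '' superhedgingCapitals (collectiveAE N P) (collectiveGains F T assets X Ys)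
        (fun _ => (N : ℝ)⁻¹) (Function.uncurry f) : Set EReal) := by
  have hcapital (c : ℝ) := (exists_capital_iff (F := F) (T := T) (assets := assets) (X := X)
    (Ys := Ys) (P := P) (f := f) (· ≤ ·) c).trans mem_superhedgingCapitals.symm
  refine congrArg sInf (Set.ext fun z => ⟨?_, ?_⟩)
  · rintro ⟨m, rfl, hm⟩
    exact ⟨_, (hcapital _).1 ⟨m, rfl, hm⟩, rfl⟩
  · rintro ⟨c, hc, rfl⟩
    obtain ⟨m, rfl, hm⟩ := (hcapital c).2 hc
    exact ⟨m, rfl, hm⟩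

lemma rhoMinus_eq_sSup [NeZero N] :
    rhoMinus P (fun i => gainsSet (F i) T (assets i) X) (spanExch Ys) f =
      sSup ((↑) '' subhedgingCapitals (collectiveAE N P) (collectiveGains F T assets X Ys)
        (fun _ => (N : ℝ)⁻¹) (Function.uncurry f) : Set EReal) := by
  have hcapital (c : ℝ) := (exists_capital_iff (F := F) (T := T) (assets := assets) (X := X)
    (Ys := Ys) (P := P) (f := f) (· ≥ ·) c).trans mem_subhedgingCapitals.symm
  refine congrArg sSup (Set.ext fun z => ⟨?_, ?_⟩)
  · rintro ⟨m, rfl, k, hk, y, hy, hm⟩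
    exact ⟨_, (hcapital _).1 ⟨m, rfl, k, hk, -y, neg_mem_spanExch hy, hm⟩, rfl⟩
  · rintro ⟨c, hc, rfl⟩
    obtain ⟨m, rfl, k, hk, y, hy, hm⟩ := (hcapital c).2 hc
    exact ⟨m, rfl, k, hk, -y, neg_mem_spanExch hy, by simpa using hm⟩

lemma replicable_iff_exists_eventuallyEq [NeZero N] :
    Replicable P (fun i => gainsSet (F i) T (assets i) X) (spanExch Ys) f ↔
      ∃ c : ℝ, ∃ w ∈ collectiveGains F T assets X Ys,
        Function.uncurry f =ᶠ[collectiveAE N P] c • (fun _ => (N : ℝ)⁻¹) + w := by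
  refine Iff.trans ⟨?_, ?_⟩ (exists_congr fun c => exists_capital_iff (· = ·) c)
  · rintro ⟨m, k, y, hy, hk, h⟩
    exact ⟨_, m, rfl, k, hk, y, hy, h⟩
  · rintro ⟨_, m, -, k, hk, y, hy, h⟩
    exact ⟨m, k, y, hy, hk, h⟩

end Market

theorem replicable_iff_rho_eq_general [MeasurableSpace Ω] (P : Measure Ω) [NeZero P]
    {T J N R : ℕ} [NeZero N] (F : Fin N → ℕ → MeasurableSpace Ω) (hF : ∀ i, Monotone (F i))
    (X : Fin J → ℕ → Ω → ℝ) (assets : Fin N → Finset (Fin J)) (Ys : Fin R → Fin N → Ω → ℝ)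
    (hNCA : NCA P (fun i => gainsSet (F i) T (assets i) X) (spanExch Ys))
    (f : Fin N → Ω → ℝ) :
    Replicable P (fun i => gainsSet (F i) T (assets i) X) (spanExch Ys) f ↔
      rhoMinus P (fun i => gainsSet (F i) T (assets i) X) (spanExch Ys) f
        = rhoPlus P (fun i => gainsSet (F i) T (assets i) X) (spanExch Ys) f := by
  have hu : (0 : ℝ) < (N : ℝ)⁻¹ := inv_pos.2 (Nat.cast_pos.2 (NeZero.pos N))
  have hu_ne : ¬ (fun _ => (N : ℝ)⁻¹) =ᶠ[collectiveAE N P] 0 :=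
    fun h => h.exists.elim fun _ => hu.ne'
  rw [replicable_iff_exists_eventuallyEq, rhoMinus_eq_sSup, rhoPlus_eq_sInf,
    sSup_subhedgingCapitals_eq_sInf_superhedgingCapitals_iff
      (superhedgeClosed_collectiveGains hF hNCA.noArbitrage) hNCA.noArbitrage
      (.of_forall fun _ => hu.le) hu_ne]

/-- replicability iff equality of sub- and superhedging prices (Proposition prepcftap2). -/
theorem replicable_iff_rho_eq
    {Ω : Type*} [m0 : MeasurableSpace Ω]
    (P : Measure Ω) [IsProbabilityMeasure P]
    (T J N : ℕ) (hT : 1 ≤ T) (hJ : 1 ≤ J) (hN : 1 ≤ N)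
    (F : Fin N → ℕ → MeasurableSpace Ω)
    (hFmono : ∀ i, Monotone (F i))
    (hFle : ∀ i t, F i t ≤ m0)
    (hFzero : ∀ i, ∀ A : Set Ω, MeasurableSet[F i 0] A → P A = 0 ∨ P A = 1)
    (X : Fin J → ℕ → Ω → ℝ)
    (assets : Fin N → Finset (Fin J))
    (hassets : ∀ i, (assets i).Nonempty)
    (hcover : ∀ j, ∃ i, j ∈ assets i)
    (hadapted : ∀ i, ∀ j ∈ assets i, ∀ t, t ≤ T → Measurable[F i t] (X j t))
    (R : ℕ) (Ys : Fin R → Fin N → Ω → ℝ)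
    (hYsmeas : ∀ r i, Measurable[F i T] (Ys r i))
    (hNCA : NCA P (fun i => gainsSet (F i) T (assets i) X) (spanExch Ys))
    (f : Fin N → Ω → ℝ) (hfmeas : ∀ i, Measurable[F i T] (f i)) :
    Replicable P (fun i => gainsSet (F i) T (assets i) X) (spanExch Ys) f ↔
      rhoMinus P (fun i => gainsSet (F i) T (assets i) X) (spanExch Ys) f
        = rhoPlus P (fun i => gainsSet (F i) T (assets i) X) (spanExch Ys) f := by
  have : NeZero N := ⟨Nat.one_le_iff_ne_zero.1 hN⟩
  exact replicable_iff_rho_eq_general P F hFmono X assets Ys hNCA f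

end CollectiveArb
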